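/- Let n ≥ 1, let F : ℝⁿ → ℝⁿ be continuously differentiable, and let x* ∈ ℝⁿ satisfy F(x*) = 0 with DF(x*) invertible; set A = DF(x*)⁻¹. Then for every ρ ∈ (0,1) there exist r > 0 and δ > 0 such that for every x ∈ ℝⁿ with ‖x − x*‖ ≤ δ, the Krawczyk condition holds at x with radius r for A and ρ; in particular, the Krawczyk condition holds at x* itself with radius r for A and ρ. -/

import Mathlib

/-!
The preconditioned derivative `A ∘ DF` is continuous and equals the identity at `x*`, so
`id - A ∘ DF z` has norm at most `ρ / 2` on every small box around a point near `x*`. Once such a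
radius `r` is fixed, the remaining term `A (F x)` tends to `A (F x*) = 0`, so it is at most
`ρ / 2 * r` for `x` close enough to `x*`.
-/

section Krawczyk

open Metric Topology

theorem eventually_nhds_prod_closedBall_subset {X : Type*} [PseudoMetricSpace X] {a : X}
    {s : Set X} (hs : s ∈ 𝓝 a) :
    ∀ᶠ p : ℝ × X in 𝓝 (0, a), closedBall p.2 p.1 ⊆ s := by
  obtain ⟨ε, hε, hball⟩ := Metric.mem_nhds_iff.1 hs
  have hcont : Continuous fun p : ℝ × X ↦ p.1 + dist p.2 a := by fun_prop
  have hsmall : ∀ᶠ p : ℝ × X in 𝓝 (0, a), p.1 + dist p.2 a < ε :=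
    hcont.continuousAt.eventually_lt_const (by simpa using hε)
  exact hsmall.mono fun p hp ↦ (closedBall_subset_ball' hp).trans hball

theorem eventually_norm_id_sub_comp_le {𝕜 X E G : Type*} [NontriviallyNormedField 𝕜]
    [TopologicalSpace X] [SeminormedAddCommGroup E] [NormedSpace 𝕜 E]
    [SeminormedAddCommGroup G] [NormedSpace 𝕜 G] {A : G →L[𝕜] E} {L : X → E →L[𝕜] G} {a : X}
    {ε : ℝ} (hL : ContinuousAt L a) (hA : A ∘L L a = .id 𝕜 E) (hε : 0 < ε) :
    ∀ᶠ z in 𝓝 a, ‖.id 𝕜 E - A ∘L L z‖ ≤ ε := by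
  have hcont : ContinuousAt (fun z ↦ ‖.id 𝕜 E - A ∘L L z‖) a :=
    (continuousAt_const.sub (continuousAt_const.clm_comp hL)).norm
  exact hcont.eventually_le_const (by simpa [hA] using hε)

variable {E G : Type*} [NormedAddCommGroup E] [NormedSpace ℝ E]
  [NormedAddCommGroup G] [NormedSpace ℝ G]
  {F : E → G} {A : G →L[ℝ] E} {x xs : E} {ρ : ℝ}

/-- The Krawczyk condition for `A` and `ρ` at `x` with radius `r`: for each `z` in the box of
radius `r` around `x`, the affine map `u ↦ -A (F x) + r • (u - A (DF z u))` sends the unit box into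
the box of radius `ρ * r`. Boxes are encoded as closed balls, which they are for the sup norm
on `ℝⁿ`; `DF` is `fderiv ℝ F`, with its default value `0` where `F` is not differentiable. -/
def KrawczykCondition (F : E → G) (A : G →L[ℝ] E) (ρ : ℝ) (x : E) (r : ℝ) : Prop :=
  ∀ z ∈ closedBall x r, ∀ u : E, ‖u‖ ≤ 1 →
    ‖-A (F x) + r • (u - A (fderiv ℝ F z u))‖ ≤ ρ * r

theorem KrawczykCondition.of_norm_le {α β r : ℝ} (hr : 0 ≤ r)
    (hresidual : ‖A (F x)‖ ≤ α * r)
    (hderiv : ∀ z ∈ closedBall x r, ‖.id ℝ E - A ∘L fderiv ℝ F z‖ ≤ β) :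
    KrawczykCondition F A (α + β) x r := by
  intro z hz u hu
  have hdefect : ‖u - A (fderiv ℝ F z u)‖ ≤ β * 1 :=
    (ContinuousLinearMap.id ℝ E - A ∘L fderiv ℝ F z).le_of_opNorm_le_of_le (hderiv z hz) hu
  calc ‖-A (F x) + r • (u - A (fderiv ℝ F z u))‖
      ≤ ‖-A (F x)‖ + ‖r • (u - A (fderiv ℝ F z u))‖ := norm_add_le _ _
    _ = ‖A (F x)‖ + r * ‖u - A (fderiv ℝ F z u)‖ := by
      rw [norm_neg, norm_smul, Real.norm_of_nonneg hr]
    _ ≤ α * r + r * (β * 1) := by gcongr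
    _ = (α + β) * r := by ring

theorem eventually_eventually_krawczykCondition (hF : ContDiffAt ℝ 1 F xs) (hFxs : F xs = 0)
    (hA : A ∘L fderiv ℝ F xs = .id ℝ E) (hρ : 0 < ρ) :
    ∀ᶠ r in 𝓝[>] 0, ∀ᶠ x in 𝓝 xs, KrawczykCondition F A ρ x r := by
  have hderiv : ∀ᶠ r in 𝓝 (0 : ℝ), ∀ᶠ x in 𝓝 xs,
      ∀ z ∈ closedBall x r, ‖.id ℝ E - A ∘L fderiv ℝ F z‖ ≤ ρ / 2 :=
    (eventually_nhds_prod_closedBall_subset <|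
      eventually_norm_id_sub_comp_le (hF.continuousAt_fderiv one_ne_zero) hA
        (half_pos hρ)).curry_nhds
  filter_upwards [hderiv.filter_mono nhdsWithin_le_nhds, self_mem_nhdsWithin] with r hderiv_r hr
  have hcont : ContinuousAt (fun x ↦ ‖A (F x)‖) xs :=
    (A.continuous.continuousAt.comp hF.continuousAt).norm
  have hresidual : ∀ᶠ x in 𝓝 xs, ‖A (F x)‖ ≤ ρ / 2 * r :=
    hcont.eventually_le_const (by simpa [hFxs] using mul_pos (half_pos hρ) hr)
  filter_upwards [hderiv_r, hresidual] with x hderiv_x hresidual_x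
  simpa only [add_halves] using KrawczykCondition.of_norm_le (le_of_lt hr) hresidual_x hderiv_x

theorem krawczyk_condition_holds_near_nonsingular_zero_general
    (hF : ContDiffAt ℝ 1 F xs) (hFxs : F xs = 0)
    (hA : A ∘L fderiv ℝ F xs = .id ℝ E) (hρ : 0 < ρ) :
    ∃ r > 0, ∃ δ > 0,
      (∀ x, ‖x - xs‖ ≤ δ → KrawczykCondition F A ρ x r) ∧ KrawczykCondition F A ρ xs r := by
  obtain ⟨r, hnear, hr⟩ := ((eventually_eventually_krawczykCondition hF hFxs hA hρ).and
    self_mem_nhdsWithin).exists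
  obtain ⟨δ, hδ, hball⟩ := nhds_basis_closedBall.eventually_iff.1 hnear
  exact ⟨r, hr, δ, hδ, fun x hx ↦ hball (mem_closedBall_iff_norm.2 hx), hnear.self_of_nhds⟩

end Krawczyk

/-- Near a nonsingular zero `x*` of `F`, with `A = DF(x*)⁻¹`, the Krawczyk
condition holds: for every `ρ ∈ (0,1)` there are `r > 0` and `δ > 0` such that
the condition holds at every `x` with `‖x − x*‖ ≤ δ` with radius `r`; in
particular it holds at `x*` itself. -/
theorem krawczyk_condition_holds_near_nonsingular_zero
    (n : ℕ) (hn : 1 ≤ n)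
    (F : (Fin n → ℝ) → (Fin n → ℝ)) (hF : ContDiff ℝ 1 F)
    (xs : Fin n → ℝ) (hFxs : F xs = 0)
    (A : (Fin n → ℝ) →L[ℝ] (Fin n → ℝ))
    (hA₁ : ∀ u : Fin n → ℝ, A ((fderiv ℝ F xs) u) = u)
    (hA₂ : ∀ u : Fin n → ℝ, (fderiv ℝ F xs) (A u) = u) :
    ∀ ρ ∈ Set.Ioo (0 : ℝ) 1, ∃ r > (0 : ℝ), ∃ δ > (0 : ℝ),
      (∀ x : Fin n → ℝ, ‖x - xs‖ ≤ δ →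
        ∀ z ∈ Metric.closedBall x r, ∀ u : Fin n → ℝ, ‖u‖ ≤ 1 →
          ‖-A (F x) + r • (u - A ((fderiv ℝ F z) u))‖ ≤ ρ * r) ∧
      (∀ z ∈ Metric.closedBall xs r, ∀ u : Fin n → ℝ, ‖u‖ ≤ 1 →
        ‖-A (F xs) + r • (u - A ((fderiv ℝ F z) u))‖ ≤ ρ * r) := fun _ hρ ↦
  krawczyk_condition_holds_near_nonsingular_zero_general hF.contDiffAt hFxs
    (ContinuousLinearMap.ext hA₁) hρ.1
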